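/- Along the cycle chart, the components of the mean curvature vector satisfy, for every u: H̃₁(u,0) = (k(u) + K(u))/2 and H̃₂(u,0) = (k_B(u) + K̄(u))/2. If moreover the cycle conditions τ_N ≡ 0 and k_B + K̄ ≡ 0 hold, then H̃₂(u,0) = 0, 2·∂H̃₁/∂v(u,0) = a(u) − k_g(u)(K(u) − k(u)) + τ(u)τ_B(u), and 2·∂H̃₂/∂v(u,0) = b(u) − 2k_g(u)K̄(u) − τ'(u). -/

import Mathlib

/-!
The chart has the form `α(u,v) = c(u) + v T(u) + v² W(u,v)` with `W` smooth (`expan`), so at `v = 0`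
the derivatives of `α` are read off from `c`, `T` and `W`:
`α_u = t`, `α_v = T`, `α_uu = t'`, `α_vv = 2W = K N + K̄ B`, with first variations in `v` equal to
`T'`, `2W`, `T''` and `6 W_v = a N + b B` for `α_u`, `α_v`, `α_uu` and `α_vv` respectively.

On the curve the normals are `N₁ = N` and `N₂ = t ∧ T ∧ N = B`: the matrix with rows `t, T, N, B` is
special orthogonal, hence its adjugate is its transpose (`wedge_frame`). This gives the values of
`H̃₁`, `H̃₂` (`Ht_value`). When `τ_N = 0`, the Leibniz rule for the wedge shows that the normals vary
to first order by `-K T` and `τ t - K̄ T` (`hasDerivAt_normals`). Moreover `F` and `G - 1` vanish to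
first order, while `E_v = -2 k_g`, so the derivative of the mean curvature quotient is
`(g_v + e_v + 2 k_g e)/2` (`hasDerivAt_meanCurv`), and substituting the variations yields
`hasDerivAt_Ht`. The operator `pdv` is defined by the Fréchet derivative on `ℝ × ℝ`; it agrees with
the derivative along the line `u = const` because `H̃₁` and `H̃₂` are differentiable at `(u,0)`
(`differentiableAt_Ht`).
-/

noncomputable section

open scoped RealInnerProductSpace

abbrev E4 : Type := EuclideanSpace ℝ (Fin 4)

/-- Partial derivative with respect to the first variable `u`. -/
def pdu {X : Type*} [NormedAddCommGroup X] [NormedSpace ℝ X]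
    (f : ℝ × ℝ → X) (p : ℝ × ℝ) : X := fderiv ℝ f p (1, 0)

/-- Partial derivative with respect to the second variable `v`. -/
def pdv {X : Type*} [NormedAddCommGroup X] [NormedSpace ℝ X]
    (f : ℝ × ℝ → X) (p : ℝ × ℝ) : X := fderiv ℝ f p (0, 1)

/-- The wedge `x ∧ y ∧ z` of three vectors of `ℝ⁴`: the unique vector satisfying
`⟪x ∧ y ∧ z, w⟫ = det (x, y, z, w)` for all `w ∈ ℝ⁴`. -/
def wedge (x y z : E4) : E4 :=
  (WithLp.equiv 2 (Fin 4 → ℝ)).symm fun i =>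
    Matrix.det (Matrix.of ![(x : Fin 4 → ℝ), y, z, fun j => if j = i then 1 else 0])

namespace Cycle

/-- Coefficient `E` of the first fundamental form. -/
def Ec (α : ℝ × ℝ → E4) (p : ℝ × ℝ) : ℝ := ⟪pdu α p, pdu α p⟫
/-- Coefficient `F` of the first fundamental form. -/
def Fc (α : ℝ × ℝ → E4) (p : ℝ × ℝ) : ℝ := ⟪pdu α p, pdv α p⟫
/-- Coefficient `G` of the first fundamental form. -/
def Gc (α : ℝ × ℝ → E4) (p : ℝ × ℝ) : ℝ := ⟪pdv α p, pdv α p⟫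

/-- `x₁ = ⟨α_u, t⟩`. -/
def x1 (α : ℝ × ℝ → E4) (t : ℝ → E4) (p : ℝ × ℝ) : ℝ := ⟪pdu α p, t p.1⟫
/-- `x₂ = ⟨α_u, T⟩`. -/
def x2 (α : ℝ × ℝ → E4) (T : ℝ → E4) (p : ℝ × ℝ) : ℝ := ⟪pdu α p, T p.1⟫
/-- `x₃ = ⟨α_u, N⟩`. -/
def x3 (α : ℝ × ℝ → E4) (N : ℝ → E4) (p : ℝ × ℝ) : ℝ := ⟪pdu α p, N p.1⟫
/-- `y₁ = ⟨α_v, N⟩`. -/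
def y1 (α : ℝ × ℝ → E4) (N : ℝ → E4) (p : ℝ × ℝ) : ℝ := ⟪pdv α p, N p.1⟫

/-- `B̄₁ = (y₁x₂ − x₃)t − x₁y₁T + x₁N`. -/
def Bb1 (α : ℝ × ℝ → E4) (t T N : ℝ → E4) (p : ℝ × ℝ) : E4 :=
  (y1 α N p * x2 α T p - x3 α N p) • t p.1 - (x1 α t p * y1 α N p) • T p.1 + x1 α t p • N p.1

/-- `B̄₂ = α_u ∧ α_v ∧ B̄₁`. -/
def Bb2 (α : ℝ × ℝ → E4) (t T N : ℝ → E4) (p : ℝ × ℝ) : E4 :=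
  wedge (pdu α p) (pdv α p) (Bb1 α t T N p)

/-- `N₁ = B̄₁/|B̄₁|`. -/
def N1 (α : ℝ × ℝ → E4) (t T N : ℝ → E4) (p : ℝ × ℝ) : E4 :=
  ‖Bb1 α t T N p‖⁻¹ • Bb1 α t T N p

/-- `N₂ = B̄₂/|B̄₂|`. -/
def N2 (α : ℝ × ℝ → E4) (t T N : ℝ → E4) (p : ℝ × ℝ) : E4 :=
  ‖Bb2 α t T N p‖⁻¹ • Bb2 α t T N p

def e1 (α : ℝ × ℝ → E4) (t T N : ℝ → E4) (p : ℝ × ℝ) : ℝ := ⟪pdu (pdu α) p, N1 α t T N p⟫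
def f1 (α : ℝ × ℝ → E4) (t T N : ℝ → E4) (p : ℝ × ℝ) : ℝ := ⟪pdv (pdu α) p, N1 α t T N p⟫
def g1 (α : ℝ × ℝ → E4) (t T N : ℝ → E4) (p : ℝ × ℝ) : ℝ := ⟪pdv (pdv α) p, N1 α t T N p⟫
def e2 (α : ℝ × ℝ → E4) (t T N : ℝ → E4) (p : ℝ × ℝ) : ℝ := ⟪pdu (pdu α) p, N2 α t T N p⟫
def f2 (α : ℝ × ℝ → E4) (t T N : ℝ → E4) (p : ℝ × ℝ) : ℝ := ⟪pdv (pdu α) p, N2 α t T N p⟫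
def g2 (α : ℝ × ℝ → E4) (t T N : ℝ → E4) (p : ℝ × ℝ) : ℝ := ⟪pdv (pdv α) p, N2 α t T N p⟫

/-- `H̃₁ = (E g₁ − 2F f₁ + G e₁)/(2(EG − F²))`. -/
def Ht1 (α : ℝ × ℝ → E4) (t T N : ℝ → E4) (p : ℝ × ℝ) : ℝ :=
  (Ec α p * g1 α t T N p - 2 * Fc α p * f1 α t T N p + Gc α p * e1 α t T N p) /
    (2 * (Ec α p * Gc α p - Fc α p ^ 2))

/-- `H̃₂ = (E g₂ − 2F f₂ + G e₂)/(2(EG − F²))`. -/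
def Ht2 (α : ℝ × ℝ → E4) (t T N : ℝ → E4) (p : ℝ × ℝ) : ℝ :=
  (Ec α p * g2 α t T N p - 2 * Fc α p * f2 α t T N p + Gc α p * e2 α t T N p) /
    (2 * (Ec α p * Gc α p - Fc α p ^ 2))

/-- The mean curvature vector `H = H̃₁N₁ + H̃₂N₂`. -/
def Hvec (α : ℝ × ℝ → E4) (t T N : ℝ → E4) (p : ℝ × ℝ) : E4 :=
  Ht1 α t T N p • N1 α t T N p + Ht2 α t T N p • N2 α t T N p

def eH (α : ℝ × ℝ → E4) (t T N : ℝ → E4) (p : ℝ × ℝ) : ℝ := ⟪pdu (pdu α) p, Hvec α t T N p⟫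
def fH (α : ℝ × ℝ → E4) (t T N : ℝ → E4) (p : ℝ × ℝ) : ℝ := ⟪pdv (pdu α) p, Hvec α t T N p⟫
def gH (α : ℝ × ℝ → E4) (t T N : ℝ → E4) (p : ℝ × ℝ) : ℝ := ⟪pdv (pdv α) p, Hvec α t T N p⟫

end Cycle

open Cycle

/-! ### Partial derivatives as derivatives along coordinate lines -/

lemma pdu_eq_of_line {X : Type*} [NormedAddCommGroup X] [NormedSpace ℝ X]
    {f : ℝ × ℝ → X} {u v : ℝ} {d : X} (hf : DifferentiableAt ℝ f (u, v))
    (h : HasDerivAt (fun s => f (s, v)) d u) : pdu f (u, v) = d := by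
  have h2 : HasDerivAt (fun s : ℝ => (s, v)) ((1 : ℝ), (0 : ℝ)) u :=
    (hasDerivAt_id u).prodMk (hasDerivAt_const u v)
  exact (hf.hasFDerivAt.comp_hasDerivAt u h2).unique h

lemma pdv_eq_of_line {X : Type*} [NormedAddCommGroup X] [NormedSpace ℝ X]
    {f : ℝ × ℝ → X} {u v : ℝ} {d : X} (hf : DifferentiableAt ℝ f (u, v))
    (h : HasDerivAt (fun s => f (u, s)) d v) : pdv f (u, v) = d := by
  have h2 : HasDerivAt (fun s : ℝ => (u, s)) ((0 : ℝ), (1 : ℝ)) v :=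
    (hasDerivAt_const v u).prodMk (hasDerivAt_id v)
  exact (hf.hasFDerivAt.comp_hasDerivAt v h2).unique h

lemma line_u {X : Type*} [NormedAddCommGroup X] [NormedSpace ℝ X]
    {f : ℝ × ℝ → X} {u v : ℝ} (hf : DifferentiableAt ℝ f (u, v)) :
    HasDerivAt (fun s => f (s, v)) (pdu f (u, v)) u := by
  have h2 : HasDerivAt (fun s : ℝ => (s, v)) ((1 : ℝ), (0 : ℝ)) u :=
    (hasDerivAt_id u).prodMk (hasDerivAt_const u v)
  exact hf.hasFDerivAt.comp_hasDerivAt u h2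

lemma line_v {X : Type*} [NormedAddCommGroup X] [NormedSpace ℝ X]
    {f : ℝ × ℝ → X} {u v : ℝ} (hf : DifferentiableAt ℝ f (u, v)) :
    HasDerivAt (fun s => f (u, s)) (pdv f (u, v)) v := by
  have h2 : HasDerivAt (fun s : ℝ => (u, s)) ((0 : ℝ), (1 : ℝ)) v :=
    (hasDerivAt_const v u).prodMk (hasDerivAt_id v)
  exact hf.hasFDerivAt.comp_hasDerivAt v h2

lemma contDiff_pdu {X : Type*} [NormedAddCommGroup X] [NormedSpace ℝ X]
    {f : ℝ × ℝ → X} (hf : ContDiff ℝ (⊤ : ℕ∞) f) : ContDiff ℝ (⊤ : ℕ∞) (pdu f) := by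
  have h : ContDiff ℝ (⊤ : ℕ∞) (fderiv ℝ f) := hf.fderiv_right (by exact_mod_cast le_top)
  exact h.clm_apply contDiff_const

lemma contDiff_pdv {X : Type*} [NormedAddCommGroup X] [NormedSpace ℝ X]
    {f : ℝ × ℝ → X} (hf : ContDiff ℝ (⊤ : ℕ∞) f) : ContDiff ℝ (⊤ : ℕ∞) (pdv f) := by
  have h : ContDiff ℝ (⊤ : ℕ∞) (fderiv ℝ f) := hf.fderiv_right (by exact_mod_cast le_top)
  exact h.clm_apply contDiff_const

lemma ContDiff.dAt {X Y : Type*} [NormedAddCommGroup X] [NormedSpace ℝ X]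
    [NormedAddCommGroup Y] [NormedSpace ℝ Y]
    {f : X → Y} (hf : ContDiff ℝ (⊤ : ℕ∞) f) (p : X) : DifferentiableAt ℝ f p :=
  (hf.differentiable (by simp)) p

/-! ### Expansion of a chart in the normal variable -/

/-- A map `C(u) + v D(u) + v² W(u,v)`: the expansion of a chart to second order in the normal
direction. -/
def expan (C D : ℝ → E4) (W : ℝ × ℝ → E4) (p : ℝ × ℝ) : E4 :=
  C p.1 + p.2 • D p.1 + p.2 ^ 2 • W p

lemma contDiff_expan {C D : ℝ → E4} {W : ℝ × ℝ → E4} (hC : ContDiff ℝ (⊤ : ℕ∞) C)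
    (hD : ContDiff ℝ (⊤ : ℕ∞) D) (hW : ContDiff ℝ (⊤ : ℕ∞) W) :
    ContDiff ℝ (⊤ : ℕ∞) (expan C D W) := by
  unfold expan
  fun_prop

lemma pdu_expan {C D : ℝ → E4} {W : ℝ × ℝ → E4} (hC : ContDiff ℝ (⊤ : ℕ∞) C)
    (hD : ContDiff ℝ (⊤ : ℕ∞) D) (hW : ContDiff ℝ (⊤ : ℕ∞) W) :
    pdu (expan C D W) = expan (deriv C) (deriv D) (pdu W) := by
  funext ⟨u, v⟩
  refine pdu_eq_of_line ((contDiff_expan hC hD hW).dAt _) ?_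
  exact ((hC.dAt u).hasDerivAt.add ((hD.dAt u).hasDerivAt.const_smul v)).add
    ((line_u (hW.dAt (u, v))).const_smul (v ^ 2))

lemma pdv_expan {C D : ℝ → E4} {W : ℝ × ℝ → E4} (hC : ContDiff ℝ (⊤ : ℕ∞) C)
    (hD : ContDiff ℝ (⊤ : ℕ∞) D) (hW : ContDiff ℝ (⊤ : ℕ∞) W) :
    pdv (expan C D W) = fun p => D p.1 + p.2 • ((2 : ℝ) • W p + p.2 • pdv W p) := by
  funext ⟨u, v⟩
  refine pdv_eq_of_line ((contDiff_expan hC hD hW).dAt _) ?_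
  have h := ((hasDerivAt_const v (C u)).add ((hasDerivAt_id v).smul_const (D u))).add
    ((hasDerivAt_pow 2 v).smul (line_v (hW.dAt (u, v))))
  refine h.congr_deriv ?_
  simp
  module

lemma pdv_pdv_expan {C D : ℝ → E4} {W : ℝ × ℝ → E4} (hC : ContDiff ℝ (⊤ : ℕ∞) C)
    (hD : ContDiff ℝ (⊤ : ℕ∞) D) (hW : ContDiff ℝ (⊤ : ℕ∞) W) :
    pdv (pdv (expan C D W)) =
      fun p => (2 : ℝ) • W p + p.2 • ((4 : ℝ) • pdv W p + p.2 • pdv (pdv W) p) := by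
  have h0 : ContDiff ℝ (⊤ : ℕ∞) (pdv (expan C D W)) := contDiff_pdv (contDiff_expan hC hD hW)
  have hWv := contDiff_pdv hW
  funext ⟨u, v⟩
  refine pdv_eq_of_line (h0.dAt _) ?_
  rw [pdv_expan hC hD hW]
  have h := (hasDerivAt_const v (D u)).add ((hasDerivAt_id v).smul
    (((line_v (hW.dAt (u, v))).const_smul (2 : ℝ)).add
      ((hasDerivAt_id v).smul (line_v (hWv.dAt (u, v))))))
  refine h.congr_deriv ?_
  simp
  module

/-- Along `u = const` the derivative of an expansion at `v = 0` is its linear coefficient. -/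
lemma hasDerivAt_line_expan {C D : ℝ → E4} {W : ℝ × ℝ → E4} (hW : ContDiff ℝ (⊤ : ℕ∞) W) (u : ℝ) :
    HasDerivAt (fun v => expan C D W (u, v)) (D u) 0 := by
  have h := ((hasDerivAt_const 0 (C u)).add ((hasDerivAt_id 0).smul_const (D u))).add
    ((hasDerivAt_pow 2 (0 : ℝ)).smul (line_v (hW.dAt (u, 0))))
  refine h.congr_deriv ?_
  simp

/-! ### First variations of normalised vectors and of the mean curvature quotient -/

/-- If `|Z(0)| = 1`, normalising `Z` projects its derivative off `Z(0)`. -/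
lemma hasDerivAt_normalize {Z : ℝ → E4} {Z' : E4} (hZ : HasDerivAt Z Z' 0) (h1 : ⟪Z 0, Z 0⟫ = 1) :
    HasDerivAt (fun v => ‖Z v‖⁻¹ • Z v) (Z' - ⟪Z 0, Z'⟫ • Z 0) 0 := by
  have hn : ‖Z 0‖ = 1 := by
    rw [real_inner_self_eq_norm_sq] at h1
    nlinarith [norm_nonneg (Z 0)]
  have h2 : HasDerivAt (fun v => ‖Z v‖) ⟪Z 0, Z'⟫ 0 := by
    have h3 : HasDerivAt (fun v => ‖Z v‖ ^ 2) (2 * ⟪Z 0, Z'⟫) 0 := hZ.norm_sq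
    have h4 := h3.sqrt (by simp [hn])
    simp only [Real.sqrt_sq (norm_nonneg _), hn] at h4
    exact h4.congr_deriv (by ring)
  refine ((h2.inv (by simp [hn])).smul hZ).congr_deriv ?_
  simp [hn]
  module

/-- Derivative at `0` of `(E g - 2 F f + G e) / (2 (E G - F²))` when the first fundamental form is
the identity at `0` and only `E` varies to first order. -/
lemma hasDerivAt_meanCurv {E F G e f g : ℝ → ℝ} {E' e' f' g' : ℝ}
    (hE : HasDerivAt E E' 0) (hF : HasDerivAt F 0 0) (hG : HasDerivAt G 0 0)
    (he : HasDerivAt e e' 0) (hf : HasDerivAt f f' 0) (hg : HasDerivAt g g' 0)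
    (hE0 : E 0 = 1) (hF0 : F 0 = 0) (hG0 : G 0 = 1) :
    HasDerivAt (fun v => (E v * g v - 2 * F v * f v + G v * e v) / (2 * (E v * G v - F v ^ 2)))
      ((g' + e' - E' * e 0) / 2) 0 := by
  have h := (((hE.mul hg).sub ((hF.const_mul 2).mul hf)).add (hG.mul he)).div
    (((hE.mul hG).sub (hF.pow 2)).const_mul 2) (by simp [hE0, hF0, hG0])
  refine h.congr_deriv ?_
  simp [hE0, hF0, hG0]
  ring

/-! ### The triple wedge in `ℝ⁴` -/

lemma wedge_apply (x y z : E4) (i : Fin 4) : wedge x y z i =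
    Matrix.det (Matrix.of ![(x : Fin 4 → ℝ), y, z, fun j => if j = i then 1 else 0]) := rfl

/-- Coordinates of `x ∧ y ∧ z` as `3 × 3` minors. -/
lemma wedge_coords (x y z : E4) :
    wedge x y z 0 = -(x 1 * (y 2 * z 3 - y 3 * z 2) - x 2 * (y 1 * z 3 - y 3 * z 1)
      + x 3 * (y 1 * z 2 - y 2 * z 1)) ∧
    wedge x y z 1 = x 0 * (y 2 * z 3 - y 3 * z 2) - x 2 * (y 0 * z 3 - y 3 * z 0)
      + x 3 * (y 0 * z 2 - y 2 * z 0) ∧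
    wedge x y z 2 = -(x 0 * (y 1 * z 3 - y 3 * z 1) - x 1 * (y 0 * z 3 - y 3 * z 0)
      + x 3 * (y 0 * z 1 - y 1 * z 0)) ∧
    wedge x y z 3 = x 0 * (y 1 * z 2 - y 2 * z 1) - x 1 * (y 0 * z 2 - y 2 * z 0)
      + x 2 * (y 0 * z 1 - y 1 * z 0) := by
  refine ⟨?_, ?_, ?_, ?_⟩ <;>
  · rw [wedge_apply]
    simp [Matrix.det_succ_row_zero, Fin.sum_univ_succ, Fin.succAbove]
    ring

lemma E4_ext {x y : E4} (h : x 0 = y 0 ∧ x 1 = y 1 ∧ x 2 = y 2 ∧ x 3 = y 3) : x = y := by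
  obtain ⟨h0, h1, h2, h3⟩ := h
  ext i
  fin_cases i <;> assumption

/-- In the first order variation of `t ∧ T ∧ N` only two components of the variation of each factor
survive. -/
lemma wedge_var (t T N B : E4) (x₁ x₂ x₃ x₄ : ℝ) :
    wedge (x₁ • t + x₂ • T + x₃ • N + x₄ • B) T N = x₁ • wedge t T N + x₄ • wedge B T N ∧
    wedge t (x₁ • t + x₂ • T + x₃ • N + x₄ • B) N = x₂ • wedge t T N + x₄ • wedge t B N ∧
    wedge t T (x₁ • t + x₂ • T + x₃ • N) = x₃ • wedge t T N := by
  refine ⟨?_, ?_, ?_⟩ <;> apply E4_ext <;>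
    simp only [(wedge_coords _ _ _).1, (wedge_coords _ _ _).2.1, (wedge_coords _ _ _).2.2.1,
      (wedge_coords _ _ _).2.2.2, PiLp.add_apply, PiLp.smul_apply, smul_eq_mul] <;>
    refine ⟨?_, ?_, ?_, ?_⟩ <;> ring

lemma differentiableAt_wedge {P : Type*} [NormedAddCommGroup P] [NormedSpace ℝ P]
    {X Y Z : P → E4} {p : P} (hX : DifferentiableAt ℝ X p) (hY : DifferentiableAt ℝ Y p)
    (hZ : DifferentiableAt ℝ Z p) : DifferentiableAt ℝ (fun q => wedge (X q) (Y q) (Z q)) p := by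
  rw [differentiableAt_euclidean] at hX hY hZ ⊢
  have hX0 := hX 0; have hX1 := hX 1; have hX2 := hX 2; have hX3 := hX 3
  have hY0 := hY 0; have hY1 := hY 1; have hY2 := hY 2; have hY3 := hY 3
  have hZ0 := hZ 0; have hZ1 := hZ 1; have hZ2 := hZ 2; have hZ3 := hZ 3
  intro i
  fin_cases i
  · simp only [Fin.zero_eta, (wedge_coords _ _ _).1]; fun_prop
  · simp only [Fin.mk_one, (wedge_coords _ _ _).2.1]; fun_prop
  · simp only [Fin.reduceFinMk, (wedge_coords _ _ _).2.2.1]; fun_prop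
  · simp only [Fin.reduceFinMk, (wedge_coords _ _ _).2.2.2]; fun_prop

lemma hasDerivAt_det3 {a b c d e f g h i : ℝ → ℝ} {a' b' c' d' e' f' g' h' i' : ℝ}
    (ha : HasDerivAt a a' 0) (hb : HasDerivAt b b' 0) (hc : HasDerivAt c c' 0)
    (hd : HasDerivAt d d' 0) (he : HasDerivAt e e' 0) (hf : HasDerivAt f f' 0)
    (hg : HasDerivAt g g' 0) (hh : HasDerivAt h h' 0) (hi : HasDerivAt i i' 0) :
    HasDerivAt (fun v => a v * (e v * i v - f v * h v) - b v * (d v * i v - f v * g v)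
      + c v * (d v * h v - e v * g v))
      ((a' * (e 0 * i 0 - f 0 * h 0) - b' * (d 0 * i 0 - f 0 * g 0) + c' * (d 0 * h 0 - e 0 * g 0))
      + (a 0 * (e' * i 0 - f' * h 0) - b 0 * (d' * i 0 - f' * g 0) + c 0 * (d' * h 0 - e' * g 0))
      + (a 0 * (e 0 * i' - f 0 * h') - b 0 * (d 0 * i' - f 0 * g') + c 0 * (d 0 * h' - e 0 * g')))
      0 := by
  refine (((ha.mul ((he.mul hi).sub (hf.mul hh))).sub (hb.mul ((hd.mul hi).sub (hf.mul hg)))).add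
    (hc.mul ((hd.mul hh).sub (he.mul hg)))).congr_deriv ?_
  simp
  ring

lemma hasDerivAt_E4 {f : ℝ → E4} {f' : E4} {x : ℝ} :
    HasDerivAt f f' x ↔ ∀ i, HasDerivAt (fun v => f v i) (f' i) x := by
  rw [hasDerivAt_iff_hasFDerivAt, ← hasFDerivWithinAt_univ, hasFDerivWithinAt_euclidean]
  refine forall_congr' fun i => ?_
  rw [hasDerivAt_iff_hasFDerivAt, hasFDerivWithinAt_univ]
  have : (PiLp.proj 2 (fun _ : Fin 4 => ℝ) i : E4 →L[ℝ] ℝ).comp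
      (ContinuousLinearMap.toSpanSingleton ℝ f') = ContinuousLinearMap.toSpanSingleton ℝ (f' i) := by
    ext
    simp
  rw [← this]

/-- Leibniz rule for the triple wedge. -/
lemma hasDerivAt_wedge {X Y Z : ℝ → E4} {X' Y' Z' : E4} (hX : HasDerivAt X X' 0)
    (hY : HasDerivAt Y Y' 0) (hZ : HasDerivAt Z Z' 0) :
    HasDerivAt (fun v => wedge (X v) (Y v) (Z v))
      (wedge X' (Y 0) (Z 0) + wedge (X 0) Y' (Z 0) + wedge (X 0) (Y 0) Z') 0 := by
  rw [hasDerivAt_E4] at hX hY hZ ⊢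
  intro i
  fin_cases i <;> simp only [Fin.zero_eta, Fin.mk_one, Fin.reduceFinMk, PiLp.add_apply]
  · simp only [(wedge_coords _ _ _).1]
    refine (hasDerivAt_det3 (hX 1) (hX 2) (hX 3) (hY 1) (hY 2) (hY 3) (hZ 1) (hZ 2)
      (hZ 3)).neg.congr_deriv ?_
    ring
  · simp only [(wedge_coords _ _ _).2.1]
    exact hasDerivAt_det3 (hX 0) (hX 2) (hX 3) (hY 0) (hY 2) (hY 3) (hZ 0) (hZ 2) (hZ 3)
  · simp only [(wedge_coords _ _ _).2.2.1]
    refine (hasDerivAt_det3 (hX 0) (hX 1) (hX 3) (hY 0) (hY 1) (hY 3) (hZ 0) (hZ 1)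
      (hZ 3)).neg.congr_deriv ?_
    ring
  · simp only [(wedge_coords _ _ _).2.2.2]
    exact hasDerivAt_det3 (hX 0) (hX 1) (hX 2) (hY 0) (hY 1) (hY 2) (hZ 0) (hZ 1) (hZ 2)

/-- `(t, T, N, B)` is an orthonormal frame of `ℝ⁴`. -/
def IsFrame (t T N B : E4) : Prop :=
  ⟪t, t⟫ = 1 ∧ ⟪T, T⟫ = 1 ∧ ⟪N, N⟫ = 1 ∧
      ⟪B, B⟫ = 1 ∧ ⟪t, T⟫ = 0 ∧ ⟪t, N⟫ = 0 ∧ ⟪t, B⟫ = 0 ∧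
      ⟪T, N⟫ = 0 ∧ ⟪T, B⟫ = 0 ∧ ⟪N, B⟫ = 0

/-- For a positive orthonormal frame the matrix with rows `t, T, N, B` is special orthogonal, so
its adjugate is its transpose; the wedge products of three frame vectors are read off from the
columns of the adjugate. -/
lemma wedge_frame {t T N B : E4} (h : IsFrame t T N B)
    (hdet : Matrix.det (Matrix.of ![(t : Fin 4 → ℝ), T, N, B]) = 1) :
    wedge t T N = B ∧ wedge B T N = -t ∧ wedge t B N = -T := by
  set M : Matrix (Fin 4) (Fin 4) ℝ := Matrix.of ![(t : Fin 4 → ℝ), T, N, B] with hM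
  obtain ⟨h1, h2, h3, h4, h5, h6, h7, h8, h9, h10⟩ := h
  have hMM : M * M.transpose = 1 := by
    simp only [PiLp.inner_apply, RCLike.inner_apply, conj_trivial, Fin.sum_univ_four] at *
    ext i j
    fin_cases i <;> fin_cases j <;>
      simp [hM, Matrix.mul_apply, Fin.sum_univ_four] <;> linarith
  have hadj : M.adjugate = M.transpose := by
    have := congrArg (M.adjugate * ·) hMM
    simpa [← Matrix.mul_assoc, Matrix.adjugate_mul, hdet] using this.symm
  have key : ∀ i j : Fin 4, M j i = (M.updateRow j (Pi.single i 1)).det := by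
    intro i j
    rw [← Matrix.adjugate_apply, hadj, Matrix.transpose_apply]
  refine ⟨?_, ?_, ?_⟩
  · ext i
    have := key i 3
    rw [wedge_apply]
    have e : M.updateRow 3 (Pi.single i 1) =
        Matrix.of ![(t : Fin 4 → ℝ), T, N, fun j => if j = i then 1 else 0] := by
      ext a b
      fin_cases a <;> simp [hM, Matrix.updateRow_apply, Pi.single_apply]
    rw [← e, ← this]
    rfl
  · ext i
    have := key i 0
    rw [wedge_apply]
    have e : Matrix.of ![(B : Fin 4 → ℝ), T, N, fun j => if j = i then 1 else 0] =
        (M.updateRow 0 (Pi.single i 1)).submatrix (Equiv.swap 0 3) id := by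
      ext a b
      fin_cases a <;>
        simp [hM, Matrix.updateRow_apply, Pi.single_apply, Equiv.swap_apply_def]
    rw [e, Matrix.det_permute, ← this]
    simp [hM]
  · ext i
    have := key i 1
    rw [wedge_apply]
    have e : Matrix.of ![(t : Fin 4 → ℝ), B, N, fun j => if j = i then 1 else 0] =
        (M.updateRow 1 (Pi.single i 1)).submatrix (Equiv.swap 1 3) id := by
      ext a b
      fin_cases a <;>
        simp [hM, Matrix.updateRow_apply, Pi.single_apply, Equiv.swap_apply_def]
    rw [e, Matrix.det_permute, ← this]
    simp [hM]

/-! ### First variation of the normals and of the mean curvature -/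

/-- The unnormalised first normal, as a function of the frame and of two tangent vectors: for fixed `u` and
`X = α_u`, `Y = α_v` this is `B̄₁(u, ·)`. -/
def Zv (t T N X Y : E4) : E4 :=
  (⟪Y, N⟫ * ⟪X, T⟫ - ⟪X, N⟫) • t - (⟪X, t⟫ * ⟪Y, N⟫) • T + ⟪X, t⟫ • N

lemma IsFrame.symm_facts {t T N B : E4} (h : IsFrame t T N B) :
    ⟪T, t⟫ = 0 ∧ ⟪N, t⟫ = 0 ∧ ⟪B, t⟫ = 0 ∧ ⟪N, T⟫ = 0 ∧ ⟪B, T⟫ = 0 ∧ ⟪B, N⟫ = 0 := by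
  obtain ⟨-, -, -, -, h5, h6, h7, h8, h9, h10⟩ := h
  simp only [real_inner_comm] at *
  exact ⟨h5, h6, h7, h8, h9, h10⟩

lemma Zv_frame {t T N B : E4} (h : IsFrame t T N B) : Zv t T N t T = N := by
  obtain ⟨h1', h2', h3', h4', h5', h6'⟩ := h.symm_facts
  obtain ⟨h1, h2, h3, h4, h5, h6, h7, h8, h9, h10⟩ := h
  simp only [Zv, h1, h5, h6, h8]
  module

/-- First variation of `B̄₁` along a line `u = const`. -/
lemma hasDerivAt_Zv {t T N B : E4} (h : IsFrame t T N B) {X Y : ℝ → E4} {kg τ K Kb : ℝ}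
    (hX0 : X 0 = t) (hY0 : Y 0 = T)
    (hX : HasDerivAt X (-kg • t - τ • B) 0) (hY : HasDerivAt Y (K • N + Kb • B) 0) :
    HasDerivAt (fun v => Zv t T N (X v) (Y v)) (-K • T + -kg • N) 0 := by
  obtain ⟨h1', h2', h3', h4', h5', h6'⟩ := h.symm_facts
  obtain ⟨h1, h2, h3, h4, h5, h6, h7, h8, h9, h10⟩ := h
  have c : ∀ w : E4, HasDerivAt (fun _ : ℝ => w) 0 0 := fun w => hasDerivAt_const 0 w
  have hYN := hY.inner ℝ (c N)
  have hXT := hX.inner ℝ (c T)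
  have hXN := hX.inner ℝ (c N)
  have hXt := hX.inner ℝ (c t)
  refine ((((hYN.mul hXT).sub hXN).smul_const t).sub ((hXt.mul hYN).smul_const T)
    |>.add (hXt.smul_const N)).congr_deriv ?_
  simp only [hX0, hY0, inner_zero_right, inner_add_left, inner_sub_left, real_inner_smul_left,
    h1, h3, h5, h6, h8, h3', h5', h6']
  module

/-- First variations of the two unit normals along a line `u = const`, at the curve. -/
lemma hasDerivAt_normals {t T N B : E4} (h : IsFrame t T N B)
    (hdet : Matrix.det (Matrix.of ![(t : Fin 4 → ℝ), T, N, B]) = 1)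
    {X Y : ℝ → E4} {kg τ K Kb : ℝ} (hX0 : X 0 = t) (hY0 : Y 0 = T)
    (hX : HasDerivAt X (-kg • t - τ • B) 0) (hY : HasDerivAt Y (K • N + Kb • B) 0) :
    HasDerivAt (fun v => ‖Zv t T N (X v) (Y v)‖⁻¹ • Zv t T N (X v) (Y v)) (-K • T) 0 ∧
    HasDerivAt (fun v => ‖wedge (X v) (Y v) (Zv t T N (X v) (Y v))‖⁻¹ •
      wedge (X v) (Y v) (Zv t T N (X v) (Y v))) (τ • t - Kb • T) 0 := by
  have hZ := hasDerivAt_Zv h hX0 hY0 hX hY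
  have hZ0 : Zv t T N (X 0) (Y 0) = N := by rw [hX0, hY0, Zv_frame h]
  obtain ⟨w1, w2, w3⟩ := wedge_frame h hdet
  obtain ⟨h1', h2', h3', h4', h5', h6'⟩ := h.symm_facts
  obtain ⟨h1, h2, h3, h4, h5, h6, h7, h8, h9, h10⟩ := h
  constructor
  · refine (hasDerivAt_normalize hZ (by simp only [hZ0, h3])).congr_deriv ?_
    simp only [hZ0, inner_add_right, inner_smul_right, h4', h3]
    module
  · have hW := hasDerivAt_wedge hX hY hZ
    have hW' : HasDerivAt (fun v => wedge (X v) (Y v) (Zv t T N (X v) (Y v)))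
        (τ • t - Kb • T + (-2 * kg) • B) 0 := by
      refine hW.congr_deriv ?_
      have v1 := (wedge_var t T N B (-kg) 0 0 (-τ)).1
      have v2 := (wedge_var t T N B 0 0 K Kb).2.1
      have v3 := (wedge_var t T N B 0 (-K) (-kg) 0).2.2
      rw [hZ0, hX0, hY0]
      rw [show -kg • t - τ • B = -kg • t + (0 : ℝ) • T + (0 : ℝ) • N + (-τ) • B by module, v1,
        show K • N + Kb • B = (0 : ℝ) • t + (0 : ℝ) • T + K • N + Kb • B by module, v2,
        show -K • T + -kg • N = (0 : ℝ) • t + -K • T + -kg • N by module, v3, w1, w2, w3]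
      module
    have hW0 : wedge (X 0) (Y 0) (Zv t T N (X 0) (Y 0)) = B := by rw [hZ0, hX0, hY0, w1]
    refine (hasDerivAt_normalize hW' (by simp only [hW0, h4])).congr_deriv ?_
    simp only [hW0, inner_add_right, inner_sub_right, inner_smul_right, h3', h5', h4]
    module

lemma Bb1_eq_Zv (α : ℝ × ℝ → E4) (t T N : ℝ → E4) (p : ℝ × ℝ) :
    Bb1 α t T N p = Zv (t p.1) (T p.1) (N p.1) (pdu α p) (pdv α p) := rfl

/-- First variation of the mean curvature components along a line `u = const`. The hypotheses
`hX, hY, hP, hQ, hR` concern `α_u, α_v, α_uu, α_uv, α_vv`; only the existence of the derivative of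
`α_uv` matters, because its coefficient `F` vanishes to first order. -/
lemma hasDerivAt_Ht {t T N : ℝ → E4} {B : E4} {α : ℝ × ℝ → E4} {u : ℝ}
    (h : IsFrame (t u) (T u) (N u) B)
    (hdet : Matrix.det (Matrix.of ![(t u : Fin 4 → ℝ), T u, N u, B]) = 1)
    {kg k kB τ K Kb a b q₁ q₂ q₃ q₄ : ℝ} {Q' : E4}
    (hX0 : pdu α (u, 0) = t u) (hY0 : pdv α (u, 0) = T u)
    (hP0 : pdu (pdu α) (u, 0) = kg • T u + k • N u + kB • B)
    (hR0 : pdv (pdv α) (u, 0) = K • N u + Kb • B)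
    (hX : HasDerivAt (fun v => pdu α (u, v)) (-kg • t u - τ • B) 0)
    (hY : HasDerivAt (fun v => pdv α (u, v)) (K • N u + Kb • B) 0)
    (hP : HasDerivAt (fun v => pdu (pdu α) (u, v))
      (q₁ • t u + q₂ • T u + q₃ • N u + q₄ • B) 0)
    (hQ : HasDerivAt (fun v => pdv (pdu α) (u, v)) Q' 0)
    (hR : HasDerivAt (fun v => pdv (pdv α) (u, v)) (a • N u + b • B) 0) :
    HasDerivAt (fun v => Ht1 α t T N (u, v)) ((a + q₃ - kg * K + 2 * kg * k) / 2) 0 ∧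
    HasDerivAt (fun v => Ht2 α t T N (u, v)) ((b + q₄ - kg * Kb + 2 * kg * kB) / 2) 0 := by
  obtain ⟨n1, n2⟩ := hasDerivAt_normals h hdet hX0 hY0 hX hY
  have hZ0 := Zv_frame h
  have w1 := (wedge_frame h hdet).1
  obtain ⟨h1', h2', h3', h4', h5', h6'⟩ := h.symm_facts
  obtain ⟨h1, h2, h3, h4, h5, h6, h7, h8, h9, h10⟩ := h
  have nN : ‖N u‖ = 1 := by rw [norm_eq_sqrt_real_inner, h3, Real.sqrt_one]
  have nB : ‖B‖ = 1 := by rw [norm_eq_sqrt_real_inner, h4, Real.sqrt_one]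
  have hE : HasDerivAt (fun v => Ec α (u, v)) (-2 * kg) 0 := by
    refine (hX.inner ℝ hX).congr_deriv ?_
    simp only [hX0, inner_sub_left, inner_sub_right, inner_smul_right, real_inner_smul_left, h1,
      h7, h3']
    ring
  have hF : HasDerivAt (fun v => Fc α (u, v)) 0 0 := by
    refine (hX.inner ℝ hY).congr_deriv ?_
    simp only [hX0, hY0, inner_sub_left, inner_add_right, inner_smul_right, real_inner_smul_left,
      h5, h5', h6, h7]
    ring
  have hG : HasDerivAt (fun v => Gc α (u, v)) 0 0 := by
    refine (hY.inner ℝ hY).congr_deriv ?_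
    simp only [hY0, inner_add_left, inner_add_right, inner_smul_right, real_inner_smul_left,
      h8, h9, h4', h5']
    ring
  have hE0 : Ec α (u, 0) = 1 := by simp only [Ec, hX0, h1]
  have hF0 : Fc α (u, 0) = 0 := by simp only [Fc, hX0, hY0, h5]
  have hG0 : Gc α (u, 0) = 1 := by simp only [Gc, hY0, h2]
  constructor
  · refine (hasDerivAt_meanCurv hE hF hG (hP.inner ℝ n1) (hQ.inner ℝ n1) (hR.inner ℝ n1)
      hE0 hF0 hG0).congr_deriv ?_
    simp only [hX0, hY0, hZ0, hP0, hR0, nN, inv_one, one_smul, inner_add_left, inner_smul_right,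
      real_inner_smul_left, h2, h3, h6, h8, h4', h5', h6']
    ring
  · refine (hasDerivAt_meanCurv hE hF hG (hP.inner ℝ n2) (hQ.inner ℝ n2) (hR.inner ℝ n2)
      hE0 hF0 hG0).congr_deriv ?_
    simp only [hX0, hY0, hZ0, w1, hP0, hR0, nB, inv_one, one_smul, inner_add_left,
      inner_sub_right, inner_smul_right, real_inner_smul_left, h2, h4, h7, h9, h10,
      h1', h2', h3', h4', h5']
    ring

/-- Values of the mean curvature components on the curve. -/
lemma Ht_value {t T N : ℝ → E4} {B : E4} {α : ℝ × ℝ → E4} {u : ℝ}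
    (h : IsFrame (t u) (T u) (N u) B)
    (hdet : Matrix.det (Matrix.of ![(t u : Fin 4 → ℝ), T u, N u, B]) = 1)
    {kg k kB K Kb : ℝ}
    (hX0 : pdu α (u, 0) = t u) (hY0 : pdv α (u, 0) = T u)
    (hP0 : pdu (pdu α) (u, 0) = kg • T u + k • N u + kB • B)
    (hR0 : pdv (pdv α) (u, 0) = K • N u + Kb • B) :
    Ht1 α t T N (u, 0) = (k + K) / 2 ∧ Ht2 α t T N (u, 0) = (kB + Kb) / 2 := by
  have hZ0 := Zv_frame h
  have w1 := (wedge_frame h hdet).1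
  obtain ⟨h1', h2', h3', h4', h5', h6'⟩ := h.symm_facts
  obtain ⟨h1, h2, h3, h4, h5, h6, h7, h8, h9, h10⟩ := h
  have nN : ‖N u‖ = 1 := by rw [norm_eq_sqrt_real_inner, h3, Real.sqrt_one]
  have nB : ‖B‖ = 1 := by rw [norm_eq_sqrt_real_inner, h4, Real.sqrt_one]
  constructor
  · simp only [Ht1, Ec, Fc, Gc, e1, f1, g1, N1, Bb1_eq_Zv, hX0, hY0, hZ0, hP0, hR0, nN, inv_one,
      one_smul, inner_add_left, real_inner_smul_left, h1, h2, h3, h5, h8, h6']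
    ring
  · simp only [Ht2, Ec, Fc, Gc, e2, f2, g2, N2, Bb2, Bb1_eq_Zv, hX0, hY0, hZ0, w1, hP0, hR0, nB,
      inv_one, one_smul, inner_add_left, real_inner_smul_left, h1, h2, h4, h5, h9, h10]
    ring

/-- Joint differentiability of the mean curvature components at the curve, which makes the partial
derivative `pdv` (defined through the Fréchet derivative) equal to the derivative along the line. -/
lemma differentiableAt_Ht {t T N : ℝ → E4} {B : E4} {α : ℝ × ℝ → E4} {u : ℝ}
    (hα : ContDiff ℝ (⊤ : ℕ∞) α) (ht : ContDiff ℝ (⊤ : ℕ∞) t) (hT : ContDiff ℝ (⊤ : ℕ∞) T)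
    (hN : ContDiff ℝ (⊤ : ℕ∞) N) (h : IsFrame (t u) (T u) (N u) B)
    (hdet : Matrix.det (Matrix.of ![(t u : Fin 4 → ℝ), T u, N u, B]) = 1)
    (hX0 : pdu α (u, 0) = t u) (hY0 : pdv α (u, 0) = T u) :
    DifferentiableAt ℝ (Ht1 α t T N) (u, 0) ∧ DifferentiableAt ℝ (Ht2 α t T N) (u, 0) := by
  have hX := (contDiff_pdu hα).dAt (u, (0 : ℝ))
  have hY := (contDiff_pdv hα).dAt (u, (0 : ℝ))
  have hP := (contDiff_pdu (contDiff_pdu hα)).dAt (u, (0 : ℝ))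
  have hQ := (contDiff_pdv (contDiff_pdu hα)).dAt (u, (0 : ℝ))
  have hR := (contDiff_pdv (contDiff_pdv hα)).dAt (u, (0 : ℝ))
  have ht' : DifferentiableAt ℝ (fun p : ℝ × ℝ => t p.1) (u, 0) := (ht.comp contDiff_fst).dAt _
  have hT' : DifferentiableAt ℝ (fun p : ℝ × ℝ => T p.1) (u, 0) := (hT.comp contDiff_fst).dAt _
  have hN' : DifferentiableAt ℝ (fun p : ℝ × ℝ => N p.1) (u, 0) := (hN.comp contDiff_fst).dAt _
  have hZ0 : Bb1 α t T N (u, 0) = N u := by rw [Bb1_eq_Zv, hX0, hY0, Zv_frame h]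
  have hW0 : Bb2 α t T N (u, 0) = B := by
    rw [Bb2, hX0, hY0, hZ0, (wedge_frame h hdet).1]
  obtain ⟨h1, h2, h3, h4, h5, h6, h7, h8, h9, h10⟩ := h
  have hx1 : DifferentiableAt ℝ (x1 α t) (u, 0) := hX.inner ℝ ht'
  have hx2 : DifferentiableAt ℝ (x2 α T) (u, 0) := hX.inner ℝ hT'
  have hx3 : DifferentiableAt ℝ (x3 α N) (u, 0) := hX.inner ℝ hN'
  have hy1 : DifferentiableAt ℝ (y1 α N) (u, 0) := hY.inner ℝ hN'
  have hZ : DifferentiableAt ℝ (Bb1 α t T N) (u, 0) :=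
    ((((hy1.mul hx2).sub hx3).smul ht').sub ((hx1.mul hy1).smul hT')).add (hx1.smul hN')
  have hW : DifferentiableAt ℝ (Bb2 α t T N) (u, 0) := differentiableAt_wedge hX hY hZ
  have nZ : Bb1 α t T N (u, 0) ≠ 0 := by
    rw [hZ0]; rintro h0; simp [h0] at h3
  have nW : Bb2 α t T N (u, 0) ≠ 0 := by
    rw [hW0]; rintro h0; simp [h0] at h4
  have hN1 : DifferentiableAt ℝ (N1 α t T N) (u, 0) :=
    ((hZ.norm ℝ nZ).inv (norm_ne_zero_iff.2 nZ)).smul hZ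
  have hN2 : DifferentiableAt ℝ (N2 α t T N) (u, 0) :=
    ((hW.norm ℝ nW).inv (norm_ne_zero_iff.2 nW)).smul hW
  have hE : DifferentiableAt ℝ (Ec α) (u, 0) := hX.inner ℝ hX
  have hF : DifferentiableAt ℝ (Fc α) (u, 0) := hX.inner ℝ hY
  have hG : DifferentiableAt ℝ (Gc α) (u, 0) := hY.inner ℝ hY
  have hD : 2 * (Ec α (u, 0) * Gc α (u, 0) - Fc α (u, 0) ^ 2) ≠ 0 := by
    simp only [Ec, Gc, Fc, hX0, hY0, h1, h2, h5]; norm_num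
  have hden : DifferentiableAt ℝ (fun p => 2 * (Ec α p * Gc α p - Fc α p ^ 2)) (u, 0) :=
    ((hE.mul hG).sub (hF.pow 2)).const_mul 2
  have key : ∀ e f g : ℝ × ℝ → ℝ, DifferentiableAt ℝ e (u, 0) → DifferentiableAt ℝ f (u, 0) →
      DifferentiableAt ℝ g (u, 0) → DifferentiableAt ℝ (fun p =>
        (Ec α p * g p - 2 * Fc α p * f p + Gc α p * e p) /
          (2 * (Ec α p * Gc α p - Fc α p ^ 2))) (u, 0) := by
    intro e f g he hf hg
    simp only [div_eq_mul_inv]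
    exact (((hE.mul hg).sub ((hF.const_mul 2).mul hf)).add (hG.mul he)).mul (hden.inv hD)
  exact ⟨key _ _ _ (hP.inner ℝ hN1) (hQ.inner ℝ hN1) (hR.inner ℝ hN1),
    key _ _ _ (hP.inner ℝ hN2) (hQ.inner ℝ hN2) (hR.inner ℝ hN2)⟩

/-! ### The cycle chart -/

/-- along the cycle chart `H̃₁(u,0) = (k + K)/2` and `H̃₂(u,0) = (k_B + K̄)/2`;
under the cycle conditions `τ_N ≡ 0`, `k_B + K̄ ≡ 0` moreover `H̃₂(u,0) = 0`,
`2(H̃₁)_v(u,0) = a − k_g(K − k) + ττ_B` and `2(H̃₂)_v(u,0) = b − 2k_gK̄ − τ'`. -/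
theorem stmt15
    (L : ℝ) (hL : 0 < L)
    (t T N B c : ℝ → E4) (kg k kB τN τ τB K Kb a b : ℝ → ℝ) (A Ab : ℝ × ℝ → ℝ)
    (htsm : ContDiff ℝ (⊤ : ℕ∞) t) (hTsm : ContDiff ℝ (⊤ : ℕ∞) T) (hNsm : ContDiff ℝ (⊤ : ℕ∞) N)
    (hBsm : ContDiff ℝ (⊤ : ℕ∞) B) (hcsm : ContDiff ℝ (⊤ : ℕ∞) c)
    (hkgsm : ContDiff ℝ (⊤ : ℕ∞) kg) (hksm : ContDiff ℝ (⊤ : ℕ∞) k) (hkBsm : ContDiff ℝ (⊤ : ℕ∞) kB)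
    (hτNsm : ContDiff ℝ (⊤ : ℕ∞) τN) (hτsm : ContDiff ℝ (⊤ : ℕ∞) τ) (hτBsm : ContDiff ℝ (⊤ : ℕ∞) τB)
    (hKsm : ContDiff ℝ (⊤ : ℕ∞) K) (hKbsm : ContDiff ℝ (⊤ : ℕ∞) Kb) (hasm : ContDiff ℝ (⊤ : ℕ∞) a)
    (hbsm : ContDiff ℝ (⊤ : ℕ∞) b) (hAsm : ContDiff ℝ (⊤ : ℕ∞) A) (hAbsm : ContDiff ℝ (⊤ : ℕ∞) Ab)
    (htper : Function.Periodic t L) (hTper : Function.Periodic T L)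
    (hNper : Function.Periodic N L) (hBper : Function.Periodic B L)
    (hcper : Function.Periodic c L)
    (hkgper : Function.Periodic kg L) (hkper : Function.Periodic k L)
    (hkBper : Function.Periodic kB L) (hτNper : Function.Periodic τN L)
    (hτper : Function.Periodic τ L) (hτBper : Function.Periodic τB L)
    (hKper : Function.Periodic K L) (hKbper : Function.Periodic Kb L)
    (haper : Function.Periodic a L) (hbper : Function.Periodic b L)
    (hAper : ∀ u v : ℝ, A (u + L, v) = A (u, v)) (hAbper : ∀ u v : ℝ, Ab (u + L, v) = Ab (u, v))
    (hortho : ∀ u : ℝ, ⟪t u, t u⟫ = 1 ∧ ⟪T u, T u⟫ = 1 ∧ ⟪N u, N u⟫ = 1 ∧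
      ⟪B u, B u⟫ = 1 ∧ ⟪t u, T u⟫ = 0 ∧ ⟪t u, N u⟫ = 0 ∧ ⟪t u, B u⟫ = 0 ∧
      ⟪T u, N u⟫ = 0 ∧ ⟪T u, B u⟫ = 0 ∧ ⟪N u, B u⟫ = 0)
    (hdet : ∀ u : ℝ, Matrix.det (Matrix.of ![(t u : Fin 4 → ℝ), T u, N u, B u]) = 1)
    (hDt : ∀ u : ℝ, deriv t u = kg u • T u + k u • N u + kB u • B u)
    (hDT : ∀ u : ℝ, deriv T u = -(kg u) • t u - τN u • N u - τ u • B u)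
    (hDN : ∀ u : ℝ, deriv N u = -(k u) • t u + τN u • T u + τB u • B u)
    (hDB : ∀ u : ℝ, deriv B u = -(kB u) • t u + τ u • T u - τB u • N u)
    (hct : ∀ u : ℝ, deriv c u = t u)
    (hA0 : ∀ u : ℝ, A (u, 0) = 0) (hAb0 : ∀ u : ℝ, Ab (u, 0) = 0)
    (α : ℝ × ℝ → E4)
    (hα : ∀ u v : ℝ, α (u, v) = c u + v • T u +
      (K u * v ^ 2 / 2 + a u * v ^ 3 / 6 + v ^ 3 * A (u, v)) • N u +
      (Kb u * v ^ 2 / 2 + b u * v ^ 3 / 6 + v ^ 3 * Ab (u, v)) • B u) :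
    (∀ u : ℝ,
      Ht1 α t T N (u, 0) = (k u + K u) / 2 ∧
      Ht2 α t T N (u, 0) = (kB u + Kb u) / 2) ∧
    ((∀ u : ℝ, τN u = 0) → (∀ u : ℝ, kB u + Kb u = 0) →
      ∀ u : ℝ,
        Ht2 α t T N (u, 0) = 0 ∧
        2 * pdv (Ht1 α t T N) (u, 0) = a u - kg u * (K u - k u) + τ u * τB u ∧
        2 * pdv (Ht2 α t T N) (u, 0) = b u - 2 * kg u * Kb u - deriv τ u) := by
  set W : ℝ × ℝ → E4 := fun p => (K p.1 / 2 + a p.1 * p.2 / 6 + p.2 * A p) • N p.1 +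
    (Kb p.1 / 2 + b p.1 * p.2 / 6 + p.2 * Ab p) • B p.1 with hWdef
  have hW : ContDiff ℝ (⊤ : ℕ∞) W := by
    rw [hWdef]
    fun_prop
  obtain rfl : α = expan c T W := by
    funext ⟨u, v⟩
    rw [hα]
    simp only [expan, hWdef]
    module
  have hDT' : deriv T = fun u => -(kg u) • t u - τN u • N u - τ u • B u := funext hDT
  have hDt' : deriv t = fun u => kg u • T u + k u • N u + kB u • B u := funext hDt
  have hDTsm : ContDiff ℝ (⊤ : ℕ∞) (deriv T) := by
    rw [hDT']
    fun_prop
  have hct' : deriv c = t := funext hct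
  have hαsm := contDiff_expan hcsm hTsm hW
  have hu : pdu (expan c T W) = expan t (deriv T) (pdu W) := by
    rw [pdu_expan hcsm hTsm hW, hct']
  have huu : pdu (pdu (expan c T W)) = expan (deriv t) (deriv (deriv T)) (pdu (pdu W)) := by
    rw [hu, pdu_expan htsm hDTsm (contDiff_pdu hW)]
  have hv := pdv_expan hcsm hTsm hW
  have hvv := pdv_pdv_expan hcsm hTsm hW
  have hfr : ∀ u, IsFrame (t u) (T u) (N u) (B u) := hortho
  have hX0 : ∀ u, pdu (expan c T W) (u, 0) = t u := fun u => by simp [hu, expan]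
  have hY0 : ∀ u, pdv (expan c T W) (u, 0) = T u := fun u => by simp [hv]
  have hP0 : ∀ u, pdu (pdu (expan c T W)) (u, 0) = kg u • T u + k u • N u + kB u • B u :=
    fun u => by simp [huu, expan, hDt]
  have hR0 : ∀ u, pdv (pdv (expan c T W)) (u, 0) = K u • N u + Kb u • B u := fun u => by
    rw [hvv]
    simp only [hWdef]
    module
  have hval := fun u => Ht_value (hfr u) (hdet u) (hX0 u) (hY0 u) (hP0 u) (hR0 u)
  refine ⟨hval, fun hτN0 hc u => ?_⟩
  -- The term `v A(u,v)` contributes `A(u,0) = 0` to the derivative at `v = 0`.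
  have hWv : pdv W (u, 0) = (a u / 6) • N u + (b u / 6) • B u := by
    refine pdv_eq_of_line (hW.dAt _) ?_
    have hid := hasDerivAt_id (0 : ℝ)
    have aux : ∀ (x y : ℝ) (f : ℝ × ℝ → ℝ), ContDiff ℝ (⊤ : ℕ∞) f → f (u, 0) = 0 →
        HasDerivAt (fun s : ℝ => x / 2 + y * s / 6 + s * f (u, s)) (y / 6) 0 := by
      intro x y f hf h0
      refine (((hasDerivAt_const (0 : ℝ) (x / 2)).add ((hid.const_mul y).div_const 6)).add
        (hid.mul (line_v (hf.dAt (u, 0))))).congr_deriv ?_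
      simp [h0]
    exact ((aux (K u) (a u) A hAsm (hA0 u)).smul_const (N u)).add
      ((aux (Kb u) (b u) Ab hAbsm (hAb0 u)).smul_const (B u))
  have hX : HasDerivAt (fun v => pdu (expan c T W) (u, v)) (-(kg u) • t u - τ u • B u) 0 := by
    rw [hu]
    refine (hasDerivAt_line_expan (contDiff_pdu hW) u).congr_deriv ?_
    rw [hDT, hτN0]
    module
  have hY : HasDerivAt (fun v => pdv (expan c T W) (u, v)) (K u • N u + Kb u • B u) 0 := by
    rw [← hR0]
    exact line_v ((contDiff_pdv hαsm).dAt _)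
  -- With `τ_N ≡ 0`, the Darboux equations give `T''`, the first variation of `α_uu`.
  have hT2 : HasDerivAt (deriv T)
      ((-(deriv kg u) + τ u * kB u) • t u + (-(kg u) * kg u - τ u * τ u) • T u +
        (-(kg u) * k u + τ u * τB u) • N u + (-(kg u) * kB u - deriv τ u) • B u) u := by
    have e : deriv T = fun u => -(kg u) • t u - τ u • B u := by
      rw [hDT']
      funext s
      simp [hτN0]
    rw [e]
    have h1 := (htsm.dAt u).hasDerivAt
    have h2 := (hBsm.dAt u).hasDerivAt
    rw [hDt] at h1
    rw [hDB] at h2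
    refine (((hkgsm.dAt u).hasDerivAt.neg.smul h1).sub
      ((hτsm.dAt u).hasDerivAt.smul h2)).congr_deriv ?_
    simp only [Pi.neg_apply]
    module
  have hP := hasDerivAt_line_expan (C := deriv t) (D := deriv (deriv T))
    (contDiff_pdu (contDiff_pdu hW)) u
  rw [← huu, hT2.deriv] at hP
  have hQ := line_v ((contDiff_pdv (contDiff_pdu hαsm)).dAt (u, (0 : ℝ)))
  have hR : HasDerivAt (fun v => pdv (pdv (expan c T W)) (u, v)) (a u • N u + b u • B u) 0 := by
    rw [hvv]
    have h2 := contDiff_pdv hW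
    refine (((line_v (hW.dAt (u, 0))).const_smul (2 : ℝ)).add ((hasDerivAt_id (0 : ℝ)).smul
      (((line_v (h2.dAt (u, 0))).const_smul (4 : ℝ)).add ((hasDerivAt_id (0 : ℝ)).smul
        (line_v ((contDiff_pdv h2).dAt (u, 0))))))).congr_deriv ?_
    simp [hWv]
    module
  obtain ⟨d1, d2⟩ := differentiableAt_Ht hαsm htsm hTsm hNsm (hfr u) (hdet u) (hX0 u) (hY0 u)
  obtain ⟨l1, l2⟩ := hasDerivAt_Ht (hfr u) (hdet u) (hX0 u) (hY0 u) (hP0 u) (hR0 u) hX hY hP hQ hR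
  refine ⟨by rw [(hval u).2, hc u, zero_div], ?_, ?_⟩
  · rw [pdv_eq_of_line d1 l1]
    ring
  · rw [pdv_eq_of_line d2 l2]
    linear_combination kg u * hc u
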